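/- There exists a polynomial Q(t) with nonnegative integer coefficients such that (1 + t^{ℓ−1}) · Σ_{k≥0} m_k t^k − (t^{ℓ−1} + t^ℓ) · Σ_{k≥0} v_k t^k = Σ_{k≥0} b^φ_k t^k + (1 + t) · Q(t) as polynomials (all sums are finite since C is bounded). -/

import Mathlib

open LinearMap Module

noncomputable section

namespace ConeMorse

variable (A : ℤ → Type) [∀ i, AddCommGroup (A i)] [∀ i, Module ℝ (A i)]

/-- Transport along an equality of indices. -/
def lcast {m k : ℤ} (h : m = k) : A m →ₗ[ℝ] A k where
  toFun x := h ▸ x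
  map_add' x y := by subst h; rfl
  map_smul' c x := by subst h; rfl

variable (d : ∀ i, A i →ₗ[ℝ] A (i + 1))

/-- Cocycles in degree `i`. -/
def cocycles (i : ℤ) : Submodule ℝ (A i) := ker (d i)

/-- Coboundaries in degree `i`: the image of `d : A^{i-1} → A^i`. -/
def cobound (i : ℤ) : Submodule ℝ (A i) :=
  range ((lcast A (show i - 1 + 1 = i by ring)).comp (d (i - 1)))

/-- Cohomology in degree `i`: cocycles modulo coboundaries. -/
abbrev Hcoh (i : ℤ) :=
  cocycles A d i ⧸ Submodule.comap (cocycles A d i).subtype (cobound A d i)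

section OneComplex

variable (ℓ : ℤ) (φ : ∀ i, A i →ₗ[ℝ] A (i + ℓ))

/-- The cone differential `∂_C (a, b) = (∂ a + φ b, (−1)^{ℓ−1} ∂ b)` on
`Cone^i(φ) = A^i ⊕ A^{i−ℓ+1}`. -/
def coneD (i : ℤ) : (A i × A (i - ℓ + 1)) →ₗ[ℝ] (A (i + 1) × A (i + 1 - ℓ + 1)) :=
  LinearMap.prod
    ((d i).comp (LinearMap.fst ℝ (A i) (A (i - ℓ + 1))) +
      (lcast A (show i - ℓ + 1 + ℓ = i + 1 by ring)).comp
        ((φ (i - ℓ + 1)).comp (LinearMap.snd ℝ (A i) (A (i - ℓ + 1)))))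
    (((-1 : ℝ) ^ (ℓ - 1)) •
      ((lcast A (show i - ℓ + 1 + 1 = i + 1 - ℓ + 1 by ring)).comp
        ((d (i - ℓ + 1)).comp (LinearMap.snd ℝ (A i) (A (i - ℓ + 1))))))

variable [∀ i, FiniteDimensional ℝ (A i)]

/-- `m_k`: the dimension of the cochain group in degree `k`. -/
def mnum (k : ℤ) : ℕ := finrank ℝ (A k)

/-- `b_k`: the dimension of the cohomology in degree `k`. -/
def bnum (k : ℤ) : ℕ := finrank ℝ (Hcoh A d k)

/-- `v_k`: the rank of `φ : A^k → A^{k+ℓ}`. -/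
def vnum (k : ℤ) : ℕ := finrank ℝ (range (φ k))

/-- `r_k`: the rank of the induced map `[φ] : H^k → H^{k+ℓ}`, computed as the dimension of
`φ(Z^k)/(φ(Z^k) ∩ B^{k+ℓ})`. -/
def rnum (k : ℤ) : ℕ :=
  finrank ℝ ((Submodule.map (φ k) (cocycles A d k)) ⧸
    Submodule.comap (Submodule.map (φ k) (cocycles A d k)).subtype (cobound A d (k + ℓ)))

/-- `b^φ_k`: the dimension of the cone cohomology in degree `k`. -/
def bphi (k : ℤ) : ℕ :=
  finrank ℝ (Hcoh (fun i => A i × A (i - ℓ + 1)) (coneD A d ℓ φ) k)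

end OneComplex

end ConeMorse

open ConeMorse

/-!
Let `rank_k` be the rank of the cone differential out of degree `k`. Rank–nullity gives
`m_k + m_{k-ℓ+1} = b^φ_k + rank_k + rank_{k-1}`, and `∂_C (0, y) = (φ y, ±∂ y)` shows
`v_{k-ℓ+1} ≤ rank_k`. Hence the coefficients of `Q` can be taken to be the excesses
`rank_k - v_{k-ℓ+1} ≥ 0`.
-/

namespace ConeMorse

section Lcast

variable (A : ℤ → Type) [∀ i, AddCommGroup (A i)] [∀ i, Module ℝ (A i)]

lemma lcast_lcast {m k l : ℤ} (h : m = k) (h' : k = l) (x : A m) :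
    lcast A h' (lcast A h x) = lcast A (h.trans h') x := by
  subst h h'
  rfl

lemma map_lcast {s : ℤ} (f : ∀ i, A i →ₗ[ℝ] A (i + s)) {m k : ℤ} (h : m = k) (x : A m) :
    f k (lcast A h x) = lcast A (congrArg (· + s) h) (f m x) := by
  subst h
  rfl

lemma finrank_range_lcast_comp {V : Type*} [AddCommGroup V] [Module ℝ V] {m k : ℤ} (h : m = k)
    (f : V →ₗ[ℝ] A m) :
    finrank ℝ (range ((lcast A h).comp f)) = finrank ℝ (range f) := by
  subst h
  rfl

end Lcast

section Complex

variable {A : ℤ → Type} [∀ i, AddCommGroup (A i)] [∀ i, Module ℝ (A i)]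
  {d : ∀ i, A i →ₗ[ℝ] A (i + 1)}

lemma cobound_le_cocycles (hd : ∀ i, (d (i + 1)).comp (d i) = 0) (i : ℤ) :
    cobound A d i ≤ cocycles A d i := by
  rintro _ ⟨x, rfl⟩
  have hdx : d (i - 1 + 1) (d (i - 1) x) = 0 := LinearMap.congr_fun (hd (i - 1)) x
  rw [cocycles, mem_ker, comp_apply, map_lcast, hdx, map_zero]

variable (A d) in
lemma finrank_cobound (i : ℤ) : finrank ℝ (cobound A d i) = finrank ℝ (range (d (i - 1))) :=
  finrank_range_lcast_comp A _ _

lemma finrank_Hcoh_add_finrank_range_add_finrank_range [∀ i, FiniteDimensional ℝ (A i)]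
    (hd : ∀ i, (d (i + 1)).comp (d i) = 0) (i : ℤ) :
    finrank ℝ (Hcoh A d i) + finrank ℝ (range (d (i - 1))) + finrank ℝ (range (d i)) =
      finrank ℝ (A i) :=
  calc finrank ℝ (Hcoh A d i) + finrank ℝ (range (d (i - 1))) + finrank ℝ (range (d i))
    _ = finrank ℝ (Hcoh A d i) + finrank ℝ (cobound A d i) + finrank ℝ (range (d i)) := by
      rw [finrank_cobound]
    _ = finrank ℝ (cocycles A d i) + finrank ℝ (range (d i)) := by
      rw [← (Submodule.comapSubtypeEquivOfLe (cobound_le_cocycles hd i)).finrank_eq,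
        Submodule.finrank_quotient_add_finrank]
    _ = finrank ℝ (A i) := by
      rw [add_comm, cocycles, finrank_range_add_finrank_ker]

end Complex

section Cone

variable {A : ℤ → Type} [∀ i, AddCommGroup (A i)] [∀ i, Module ℝ (A i)]
  {d : ∀ i, A i →ₗ[ℝ] A (i + 1)} {ℓ : ℤ} {φ : ∀ i, A i →ₗ[ℝ] A (i + ℓ)}

lemma coneD_comp_coneD (hd : ∀ i, (d (i + 1)).comp (d i) = 0)
    (hφ : ∀ i, (d (i + ℓ)).comp (φ i) =
      ((-1 : ℝ) ^ ℓ) • (lcast A (show i + 1 + ℓ = i + ℓ + 1 by ring)).comp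
        ((φ (i + 1)).comp (d i))) (i : ℤ) :
    (coneD A d ℓ φ (i + 1)).comp (coneD A d ℓ φ i) = 0 := by
  have d_d (i : ℤ) (x : A i) : d (i + 1) (d i x) = 0 := LinearMap.congr_fun (hd i) x
  have d_φ (i : ℤ) (x : A i) : d (i + ℓ) (φ i x) = ((-1 : ℝ) ^ ℓ) •
      lcast A (show i + 1 + ℓ = i + ℓ + 1 by ring) (φ (i + 1) (d i x)) :=
    LinearMap.congr_fun (hφ i) x
  have sign_eq : (-1 : ℝ) ^ ℓ = -(-1 : ℝ) ^ (ℓ - 1) := by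
    rw [zpow_sub_one₀ (by norm_num)]
    norm_num
  refine LinearMap.ext fun x ↦ Prod.ext ?_ ?_ <;>
    simp [coneD, map_lcast, lcast_lcast, d_d, d_φ, sign_eq]

variable (A d ℓ φ)

lemma fst_comp_coneD_comp_inr (i : ℤ) :
    (LinearMap.fst ℝ _ _).comp ((coneD A d ℓ φ i).comp (LinearMap.inr ℝ _ _)) =
      (lcast A (show i - ℓ + 1 + ℓ = i + 1 by ring)).comp (φ (i - ℓ + 1)) := by
  ext x
  simp [coneD]

/-- The rank of the cone differential out of degree `i`. -/
def coneRank (i : ℤ) : ℕ := finrank ℝ (range (coneD A d ℓ φ i))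

/-- The excess of the rank of the cone differential out of degree `i` over the rank `v_{i-ℓ+1}` of
the component of `φ` it contains: the coefficient of `t^i` in `Q`. The subtraction never truncates,
by `vnum_le_coneRank`. -/
def rankExcess (i : ℤ) : ℕ := coneRank A d ℓ φ i - vnum A ℓ φ (i - ℓ + 1)

variable [∀ i, FiniteDimensional ℝ (A i)]

lemma vnum_le_mnum (i : ℤ) : vnum A ℓ φ i ≤ mnum A i :=
  finrank_range_le (φ i)

lemma vnum_le_coneRank (i : ℤ) : vnum A ℓ φ (i - ℓ + 1) ≤ coneRank A d ℓ φ i := by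
  rw [vnum, ← finrank_range_lcast_comp A (show i - ℓ + 1 + ℓ = i + 1 by ring),
    ← fst_comp_coneD_comp_inr A d, range_comp]
  exact (Submodule.finrank_map_le _ _).trans (Submodule.finrank_mono (range_comp_le_range _ _))

variable {A d ℓ φ}

lemma bphi_add_coneRank_add_coneRank (hd : ∀ i, (d (i + 1)).comp (d i) = 0)
    (hφ : ∀ i, (d (i + ℓ)).comp (φ i) =
      ((-1 : ℝ) ^ ℓ) • (lcast A (show i + 1 + ℓ = i + ℓ + 1 by ring)).comp
        ((φ (i + 1)).comp (d i))) (i : ℤ) :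
    bphi A d ℓ φ i + coneRank A d ℓ φ (i - 1) + coneRank A d ℓ φ i =
      mnum A i + mnum A (i - ℓ + 1) :=
  (finrank_Hcoh_add_finrank_range_add_finrank_range (coneD_comp_coneD hd hφ) i).trans
    (finrank_prod ..)

lemma mnum_add_mnum_eq_bphi_add_rankExcess_add_vnum (hd : ∀ i, (d (i + 1)).comp (d i) = 0)
    (hφ : ∀ i, (d (i + ℓ)).comp (φ i) =
      ((-1 : ℝ) ^ ℓ) • (lcast A (show i + 1 + ℓ = i + ℓ + 1 by ring)).comp
        ((φ (i + 1)).comp (d i))) (i : ℤ) :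
    mnum A i + mnum A (i - ℓ + 1) =
      bphi A d ℓ φ i + (rankExcess A d ℓ φ i + rankExcess A d ℓ φ (i - 1)) +
        (vnum A ℓ φ (i - ℓ + 1) + vnum A ℓ φ (i - ℓ)) := by
  have rank_nullity := bphi_add_coneRank_add_coneRank hd hφ i
  have excess : rankExcess A d ℓ φ i + vnum A ℓ φ (i - ℓ + 1) = coneRank A d ℓ φ i :=
    Nat.sub_add_cancel (vnum_le_coneRank A d ℓ φ i)
  have excess_pred :
      rankExcess A d ℓ φ (i - 1) + vnum A ℓ φ (i - ℓ) = coneRank A d ℓ φ (i - 1) := by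
    rw [show i - ℓ = i - 1 - ℓ + 1 by ring]
    exact Nat.sub_add_cancel (vnum_le_coneRank A d ℓ φ (i - 1))
  omega

end Cone

section GeneratingPoly

open Polynomial

variable {R : Type*} [Semiring R] {N : ℕ}

variable (R N) in
/-- The generating polynomial `∑ f(k) t^k` of a sequence of naturals, truncated to `0 ≤ k < N`.
The sequence is indexed by `ℤ` so that shifts of `f` need no side conditions. -/
def generatingPoly (f : ℤ → ℕ) : R[X] := ∑ k ∈ Finset.range N, (f k : R[X]) * X ^ k

lemma coeff_generatingPoly {f : ℤ → ℕ} (hf : f.support ⊆ Set.Ico 0 (N : ℤ)) (j : ℕ) :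
    (generatingPoly R N f).coeff j = f j := by
  simp only [generatingPoly, finsetSum_coeff, coeff_natCast_mul, coeff_X_pow, mul_ite, mul_one,
    mul_zero, Finset.sum_ite_eq, Finset.mem_range, ite_eq_left_iff, not_lt]
  intro hj
  have f_eq_zero : f j = 0 :=
    Function.support_subset_iff'.mp hf _ (by rw [Set.mem_Ico]; omega)
  rw [f_eq_zero, Nat.cast_zero]

lemma coeff_X_pow_mul_generatingPoly {f : ℤ → ℕ} (hf : f.support ⊆ Set.Ico 0 (N : ℤ)) (a j : ℕ) :
    (X ^ a * generatingPoly R N f).coeff j = (f (j - a : ℤ) : R) := by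
  rw [coeff_X_pow_mul', coeff_generatingPoly hf]
  split_ifs with haj
  · rw [Nat.cast_sub haj]
  · have f_eq_zero : f (j - a) = 0 :=
      Function.support_subset_iff'.mp hf _ (by rw [Set.mem_Ico]; omega)
    rw [f_eq_zero, Nat.cast_zero]

lemma one_add_X_pow_mul_generatingPoly {m b q v : ℤ → ℕ}
    (hm : m.support ⊆ Set.Ico 0 (N : ℤ)) (hb : b.support ⊆ Set.Ico 0 (N : ℤ))
    (hq : q.support ⊆ Set.Ico 0 (N : ℤ)) (hv : v.support ⊆ Set.Ico 0 (N : ℤ)) {r s : ℕ}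
    (h : ∀ i, m i + m (i - r) = b i + (q i + q (i - 1)) + (v (i - r) + v (i - s))) :
    (1 + X ^ r) * generatingPoly R N m =
      generatingPoly R N b + (1 + X) * generatingPoly R N q +
        (X ^ r + X ^ s) * generatingPoly R N v := by
  ext j
  have coeff_X_mul_q : (X * generatingPoly R N q).coeff j = (q (j - 1 : ℤ) : R) := by
    simpa only [pow_one, Nat.cast_one] using coeff_X_pow_mul_generatingPoly (R := R) hq 1 j
  simp only [add_mul, one_mul, coeff_add, coeff_generatingPoly, coeff_X_pow_mul_generatingPoly,
    coeff_X_mul_q, hm, hb, hq, hv]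
  exact_mod_cast congrArg (Nat.cast (R := R)) (h j)

end GeneratingPoly

end ConeMorse

open Polynomial in
/-- there exists a polynomial `Q(t)` with nonnegative integer coefficients
such that
`(1 + t^{ℓ−1}) · Σ_k m_k t^k − (t^{ℓ−1} + t^ℓ) · Σ_k v_k t^k = Σ_k b^φ_k t^k + (1 + t) · Q(t)`.
Since `C^k = 0` outside `0 ≤ k ≤ n`, all the quantities vanish for `k ≥ n.toNat + ℓ.toNat + 1`,
so the (a priori infinite) sums are faithfully expressed by sums up to that bound. -/
theorem cone_morse_polynomial_inequality
    (n ℓ : ℤ) (hn : 0 ≤ n) (hℓ : 1 ≤ ℓ)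
    (C : ℤ → Type) [∀ i, AddCommGroup (C i)] [∀ i, Module ℝ (C i)]
    [∀ i, FiniteDimensional ℝ (C i)]
    (hC : ∀ i, i < 0 ∨ n < i → Subsingleton (C i))
    (d : ∀ i, C i →ₗ[ℝ] C (i + 1))
    (hd : ∀ i, (d (i + 1)).comp (d i) = 0)
    (φ : ∀ i, C i →ₗ[ℝ] C (i + ℓ))
    (hφ : ∀ i, (d (i + ℓ)).comp (φ i) =
      ((-1 : ℝ) ^ ℓ) • (lcast C (show i + 1 + ℓ = i + ℓ + 1 by ring)).comp
        ((φ (i + 1)).comp (d i))) :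
    ∃ Q : Polynomial ℤ, (∀ i, 0 ≤ Q.coeff i) ∧
      (1 + X ^ (ℓ - 1).toNat) *
          (∑ k ∈ Finset.range (n.toNat + ℓ.toNat + 1), (mnum C (k : ℤ) : Polynomial ℤ) * X ^ k) -
        (X ^ (ℓ - 1).toNat + X ^ ℓ.toNat) *
          (∑ k ∈ Finset.range (n.toNat + ℓ.toNat + 1),
            (vnum C ℓ φ (k : ℤ) : Polynomial ℤ) * X ^ k) =
      (∑ k ∈ Finset.range (n.toNat + ℓ.toNat + 1),
          (bphi C d ℓ φ (k : ℤ) : Polynomial ℤ) * X ^ k) +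
        (1 + X) * Q := by
  have mnum_eq_zero (i : ℤ) (hi : i < 0 ∨ n < i) : mnum C i = 0 :=
    have := hC i hi
    finrank_zero_of_subsingleton
  have support_subset {f : ℤ → ℕ} (hf : ∀ i, f i ≤ mnum C i + mnum C (i - ℓ + 1)) :
      f.support ⊆ Set.Ico 0 ((n.toNat + ℓ.toNat + 1 : ℕ) : ℤ) := by
    refine Function.support_subset_iff'.mpr fun i hi ↦ Nat.le_zero.mp ((hf i).trans_eq ?_)
    rw [Set.mem_Ico] at hi
    rw [mnum_eq_zero i (by omega), mnum_eq_zero (i - ℓ + 1) (by omega)]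
  have decomposition := mnum_add_mnum_eq_bphi_add_rankExcess_add_vnum hd hφ
  have hm := support_subset fun i ↦ Nat.le_add_right (mnum C i) _
  have hb : (bphi C d ℓ φ).support ⊆ _ := support_subset fun i ↦ by have := decomposition i; omega
  have hq : (rankExcess C d ℓ φ).support ⊆ _ :=
    support_subset fun i ↦ by have := decomposition i; omega
  have hv := support_subset fun i ↦ (vnum_le_mnum C ℓ φ i).trans (Nat.le_add_right _ _)
  refine ⟨generatingPoly ℤ _ (rankExcess C d ℓ φ), fun i ↦ ?_,
    sub_eq_of_eq_add (one_add_X_pow_mul_generatingPoly hm hb hq hv fun i ↦ ?_)⟩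
  · rw [coeff_generatingPoly hq]
    exact Int.natCast_nonneg _
  · rw [show i - ((ℓ - 1).toNat : ℤ) = i - ℓ + 1 by omega,
      show i - (ℓ.toNat : ℤ) = i - ℓ by omega]
    exact decomposition i
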